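/- Let n ≥ 6 and let Z ∈ ℝ^{n×4} be totally positive with rows Z_1,…,Z_n, indexed cyclically so that Z_{n+1} = Z_1. Let i, j, k be three residues modulo n such that the three sets {i,i+1}, {j,j+1}, {k,k+1} (computed modulo n) are pairwise disjoint. Then there is no totally nonnegative matrix X ∈ ℝ^{2×n} of rank 2 such that all three determinants det(two rows of X·Z, Z_i, Z_{i+1}), det(two rows of X·Z, Z_j, Z_{j+1}) and det(two rows of X·Z, Z_k, Z_{k+1}) vanish, where each determinant is of the 4×4 matrix whose rows are the two rows of X·Z followed by the two indicated rows of Z. -/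

import Mathlib

/-!
By multilinearity and antisymmetry, twice the bracket `⟨(X·Z) Z_c Z_{c+1}⟩` equals the sum over all
`a, b` of the minor of `X` in columns `a, b` times `⟨Z_a Z_b Z_c Z_{c+1}⟩` (`two_mul_det4_mul`).
Since `c, c+1` are cyclically adjacent, total positivity of `Z` gives these four-brackets for
`a < b` one common sign, strict as soon as `a, b ∉ {c, c+1}` (`exists_sign_det4`; the wrap-around
pair `n, 1` contributes a global minus sign). So the sum has terms of one sign, and if it vanishes,
every minor of `X` whose columns avoid `{c, c+1}` vanishes (`minor_eq_zero`).
A two-element set of columns cannot meet three pairwise disjoint sets, hence three vanishing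
brackets force all minors of `X` to vanish, against `rank X = 2` (`exists_minor_ne_zero`).
-/

/-- The determinant of the 4×4 matrix with the given four rows. -/
noncomputable def det4 (a b c d : Fin 4 → ℝ) : ℝ :=
  Matrix.det (Matrix.of ![a, b, c, d])

/-- `Z ∈ ℝ^{n×4}` is totally positive: every `4×4` minor formed by rows `i₁<i₂<i₃<i₄`
is positive. -/
def IsTotallyPositive4 {n : ℕ} (Z : Matrix (Fin n) (Fin 4) ℝ) : Prop :=
  ∀ r : Fin 4 → Fin n, StrictMono r → 0 < ((Z.submatrix r id).det)

/-- `X ∈ ℝ^{2×n}` is totally nonnegative: every `2×2` minor formed by columns `i<j`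
is nonnegative. -/
def IsTotallyNonneg2 {n : ℕ} (X : Matrix (Fin 2) (Fin n) ℝ) : Prop :=
  ∀ i j : Fin n, i < j → 0 ≤ X 0 i * X 1 j - X 0 j * X 1 i

theorem det4_eq (a b c d : Fin 4 → ℝ) : det4 a b c d =
    (a 0 * b 1 - a 1 * b 0) * (c 2 * d 3 - c 3 * d 2)
    - (a 0 * b 2 - a 2 * b 0) * (c 1 * d 3 - c 3 * d 1)
    + (a 0 * b 3 - a 3 * b 0) * (c 1 * d 2 - c 2 * d 1)
    + (a 1 * b 2 - a 2 * b 1) * (c 0 * d 3 - c 3 * d 0)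
    - (a 1 * b 3 - a 3 * b 1) * (c 0 * d 2 - c 2 * d 0)
    + (a 2 * b 3 - a 3 * b 2) * (c 0 * d 1 - c 1 * d 0) := by
  simp [det4, Matrix.det_succ_row_zero, Fin.sum_univ_succ, Fin.succAbove]
  ring

theorem det4_swap (a b c d : Fin 4 → ℝ) : det4 b a c d = -det4 a b c d := by
  simp only [det4_eq]; ring

theorem det4_pos {n : ℕ} {Z : Matrix (Fin n) (Fin 4) ℝ} (hZ : IsTotallyPositive4 Z)
    {a b c d : Fin n} (hab : a < b) (hbc : b < c) (hcd : c < d) :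
    0 < det4 (Z a) (Z b) (Z c) (Z d) := by
  have hr : StrictMono ![a, b, c, d] := by
    rw [Fin.strictMono_iff_lt_succ]
    intro i
    fin_cases i <;> simpa
  have h := hZ ![a, b, c, d] hr
  have e : Z.submatrix ![a, b, c, d] id = Matrix.of ![Z a, Z b, Z c, Z d] := by
    ext i j
    fin_cases i <;> rfl
  rwa [e] at h

theorem det4_mul_left {n : ℕ} (X : Matrix (Fin 2) (Fin n) ℝ) (Z : Matrix (Fin n) (Fin 4) ℝ)
    (r : Fin 2) (b c d : Fin 4 → ℝ) :
    det4 ((X * Z) r) b c d = ∑ a, X r a * det4 (Z a) b c d := by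
  simp only [det4_eq, Matrix.mul_apply, Finset.sum_mul, ← Finset.sum_sub_distrib,
    ← Finset.sum_add_distrib]
  refine Finset.sum_congr rfl fun a _ => ?_
  ring

/-- The Cauchy–Binet expansion of the bracket, symmetrized over ordered pairs of columns. -/
theorem two_mul_det4_mul {n : ℕ} (X : Matrix (Fin 2) (Fin n) ℝ) (Z : Matrix (Fin n) (Fin 4) ℝ)
    (u v : Fin 4 → ℝ) :
    2 * det4 ((X * Z) 0) ((X * Z) 1) u v =
      ∑ a, ∑ b, (X 0 a * X 1 b - X 0 b * X 1 a) * det4 (Z a) (Z b) u v := by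
  have h : det4 ((X * Z) 0) ((X * Z) 1) u v =
      ∑ a, ∑ b, X 0 a * X 1 b * det4 (Z a) (Z b) u v := by
    rw [det4_mul_left]
    refine Finset.sum_congr rfl fun a _ => ?_
    rw [det4_swap, det4_mul_left, ← Finset.sum_neg_distrib, Finset.mul_sum]
    refine Finset.sum_congr rfl fun b _ => ?_
    rw [det4_swap (Z a)]; ring
  have h' : det4 ((X * Z) 0) ((X * Z) 1) u v =
      ∑ a, ∑ b, -(X 0 b * X 1 a) * det4 (Z a) (Z b) u v := by
    rw [h, Finset.sum_comm]
    refine Finset.sum_congr rfl fun a _ => Finset.sum_congr rfl fun b _ => ?_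
    rw [det4_swap]; ring
  rw [two_mul]
  nth_rewrite 1 [h]
  rw [h', ← Finset.sum_add_distrib]
  refine Finset.sum_congr rfl fun a _ => ?_
  rw [← Finset.sum_add_distrib]
  refine Finset.sum_congr rfl fun b _ => ?_
  ring

/-- For a cyclically adjacent pair `c, c + 1` the brackets `⟨Z_a Z_b Z_c Z_{c+1}⟩`, `a < b`, share
a sign `s`; the proof takes `s = -1` for the wrap-around pair and `s = 1` otherwise. -/
theorem exists_sign_det4 {n : ℕ} [NeZero n] (hn : 6 ≤ n) {Z : Matrix (Fin n) (Fin 4) ℝ}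
    (hZ : IsTotallyPositive4 Z) (c : Fin n) :
    ∃ s : ℝ, ∀ a b : Fin n, a < b →
      0 ≤ s * det4 (Z a) (Z b) (Z c) (Z (c + 1)) ∧
      (a ∉ ({c, c + 1} : Finset (Fin n)) → b ∉ ({c, c + 1} : Finset (Fin n)) →
        0 < s * det4 (Z a) (Z b) (Z c) (Z (c + 1))) := by
  -- It suffices to treat columns avoiding `c, c + 1`, since otherwise a row is repeated.
  suffices H : ∃ s : ℝ, ∀ a b : Fin n, a < b → a ∉ ({c, c + 1} : Finset (Fin n)) →
      b ∉ ({c, c + 1} : Finset (Fin n)) → 0 < s * det4 (Z a) (Z b) (Z c) (Z (c + 1)) by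
    obtain ⟨s, hs⟩ := H
    refine ⟨s, fun a b hab => ⟨?_, hs a b hab⟩⟩
    by_cases h : a ∉ ({c, c + 1} : Finset (Fin n)) ∧ b ∉ ({c, c + 1} : Finset (Fin n))
    · exact (hs a b hab h.1 h.2).le
    · have h0 : det4 (Z a) (Z b) (Z c) (Z (c + 1)) = 0 := by
        have h' : (a = c ∨ a = c + 1) ∨ (b = c ∨ b = c + 1) := by
          simp only [Finset.mem_insert, Finset.mem_singleton] at h
          tauto
        rcases h' with (h' | h') | (h' | h') <;> rw [h', det4_eq] <;> ring
      simp [h0]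
  have hone : ((1 : Fin n) : ℕ) = 1 := by
    rw [Fin.val_one', Nat.mod_eq_of_lt (by omega)]
  simp only [Finset.mem_insert, Finset.mem_singleton, not_or]
  by_cases hc : (c : ℕ) + 1 < n
  · have hv : ((c + 1 : Fin n) : ℕ) = c + 1 := by
      rw [Fin.val_add, hone, Nat.mod_eq_of_lt hc]
    refine ⟨1, fun a b hab ha hb => ?_⟩
    rw [one_mul]
    generalize c + 1 = d at *
    have hcd : c < d := by rw [Fin.lt_def]; omega
    have ha' : a < c ∨ d < a := by
      simp only [Fin.lt_def, Fin.ext_iff] at *; omega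
    have hb' : b < c ∨ d < b := by
      simp only [Fin.lt_def, Fin.ext_iff] at *; omega
    rcases hb' with hb' | hb'
    · exact det4_pos hZ hab hb' hcd
    rcases ha' with ha' | ha'
    · have := det4_pos hZ ha' hcd hb'
      rw [det4_eq] at this ⊢
      linarith
    · have := det4_pos hZ hcd ha' hab
      rw [det4_eq] at this ⊢
      linarith
  · have hcn : (c : ℕ) + 1 = n := by have := c.isLt; omega
    have hv : ((c + 1 : Fin n) : ℕ) = 0 := by
      rw [Fin.val_add, hone, hcn, Nat.mod_self]
    refine ⟨-1, fun a b hab ha hb => ?_⟩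
    generalize c + 1 = d at *
    have hda : d < a := by
      simp only [Fin.lt_def, Fin.ext_iff] at *; omega
    have hbc : b < c := by
      have := b.isLt
      simp only [Fin.lt_def, Fin.ext_iff] at *; omega
    -- Moving `Z_1` from the last row to the first is an odd permutation.
    have := det4_pos hZ hda hab hbc
    rw [det4_eq] at this ⊢
    linarith

theorem minor_eq_zero {n : ℕ} [NeZero n] (hn : 6 ≤ n) {Z : Matrix (Fin n) (Fin 4) ℝ}
    (hZ : IsTotallyPositive4 Z) {X : Matrix (Fin 2) (Fin n) ℝ} (hX : IsTotallyNonneg2 X)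
    {c : Fin n} (h : det4 ((X * Z) 0) ((X * Z) 1) (Z c) (Z (c + 1)) = 0)
    {a b : Fin n} (hab : a < b) (ha : a ∉ ({c, c + 1} : Finset (Fin n)))
    (hb : b ∉ ({c, c + 1} : Finset (Fin n))) :
    X 0 a * X 1 b - X 0 b * X 1 a = 0 := by
  obtain ⟨s, hs⟩ := exists_sign_det4 hn hZ c
  have hsum : ∑ a, ∑ b, (X 0 a * X 1 b - X 0 b * X 1 a) *
      (s * det4 (Z a) (Z b) (Z c) (Z (c + 1))) = 0 := by
    have h2 := two_mul_det4_mul X Z (Z c) (Z (c + 1))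
    rw [h, mul_zero] at h2
    have h3 := congrArg (s * ·) h2
    simp only [Finset.mul_sum, mul_zero] at h3
    rw [h3]
    refine Finset.sum_congr rfl fun a _ => Finset.sum_congr rfl fun b _ => ?_
    ring
  have hnn : ∀ a b : Fin n, 0 ≤ (X 0 a * X 1 b - X 0 b * X 1 a) *
      (s * det4 (Z a) (Z b) (Z c) (Z (c + 1))) := by
    intro a b
    rcases lt_trichotomy a b with hl | rfl | hl
    · exact mul_nonneg (hX a b hl) (hs a b hl).1
    · simp
    · -- Both factors change sign when `a` and `b` are exchanged.
      have := mul_nonneg (hX b a hl) (hs b a hl).1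
      rw [det4_swap] at this
      linarith
  have h1 := (Finset.sum_eq_zero_iff_of_nonneg
    (fun a _ => Finset.sum_nonneg fun b _ => hnn a b)).1 hsum a (Finset.mem_univ a)
  have h2 := (Finset.sum_eq_zero_iff_of_nonneg (fun b _ => hnn a b)).1 h1 b (Finset.mem_univ b)
  exact (mul_eq_zero.1 h2).resolve_right ((hs a b hab).2 ha hb).ne'

theorem exists_minor_ne_zero {n : ℕ} {X : Matrix (Fin 2) (Fin n) ℝ} (hX : X.rank = 2) :
    ∃ a b : Fin n, a < b ∧ X 0 a * X 1 b - X 0 b * X 1 a ≠ 0 := by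
  by_contra! H
  have hall : ∀ a b, X 0 a * X 1 b - X 0 b * X 1 a = 0 := by
    intro a b
    rcases lt_trichotomy a b with hl | rfl | hl
    · exact H a b hl
    · ring
    · linarith [H b a hl]
  have hli : LinearIndependent ℝ X.row := by
    rw [linearIndependent_iff_card_eq_finrank_span, Set.finrank, ← Matrix.rank_eq_finrank_span_row,
      hX, Fintype.card_fin]
  have hrel := Fintype.linearIndependent_iff.1 hli
  -- The vanishing minors containing column `a` are a linear relation between the two rows.
  have h0 : ∀ a, X 0 a = 0 := by
    intro a
    have := hrel ![X 1 a, -X 0 a] (by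
      ext b
      have := hall a b
      simp [Fin.sum_univ_two, Matrix.row]
      linarith) 1
    simpa using this
  exact hli.ne_zero 0 (funext h0)

/-- For `n ≥ 6`, `Z` totally positive with cyclically indexed rows, and
`i, j, k` residues mod `n` with `{i,i+1}`, `{j,j+1}`, `{k,k+1}` pairwise disjoint, there is no
totally nonnegative rank-2 matrix `X ∈ ℝ^{2×n}` for which the three brackets
`⟨(X·Z) Z_i Z_{i+1}⟩`, `⟨(X·Z) Z_j Z_{j+1}⟩`, `⟨(X·Z) Z_k Z_{k+1}⟩` all vanish. -/
theorem stmt2 (n : ℕ) [NeZero n] (hn : 6 ≤ n)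
    (Z : Matrix (Fin n) (Fin 4) ℝ) (hZ : IsTotallyPositive4 Z)
    (i j k : Fin n)
    (hij : ({i, i + 1} : Finset (Fin n)) ∩ {j, j + 1} = ∅)
    (hik : ({i, i + 1} : Finset (Fin n)) ∩ {k, k + 1} = ∅)
    (hjk : ({j, j + 1} : Finset (Fin n)) ∩ {k, k + 1} = ∅) :
    ¬ ∃ X : Matrix (Fin 2) (Fin n) ℝ, IsTotallyNonneg2 X ∧ X.rank = 2 ∧
      det4 ((X * Z) 0) ((X * Z) 1) (Z i) (Z (i + 1)) = 0 ∧
      det4 ((X * Z) 0) ((X * Z) 1) (Z j) (Z (j + 1)) = 0 ∧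
      det4 ((X * Z) 0) ((X * Z) 1) (Z k) (Z (k + 1)) = 0 := by
  rintro ⟨X, hX, hr, hi, hj, hk⟩
  obtain ⟨a, b, hab, hne⟩ := exists_minor_ne_zero hr
  have key : ∀ c : Fin n, det4 ((X * Z) 0) ((X * Z) 1) (Z c) (Z (c + 1)) = 0 →
      a ∈ ({c, c + 1} : Finset (Fin n)) ∨ b ∈ ({c, c + 1} : Finset (Fin n)) := by
    intro c hc
    by_contra! h
    exact hne (minor_eq_zero hn hZ hX hc hab h.1 h.2)
  rw [← Finset.disjoint_iff_inter_eq_empty, Finset.disjoint_left] at hij hik hjk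
  -- Two columns cannot meet three pairwise disjoint sets.
  rcases key i hi with h1 | h1 <;> rcases key j hj with h2 | h2 <;>
    rcases key k hk with h3 | h3 <;>
    first
    | exact hij h1 h2
    | exact hik h1 h3
    | exact hjk h2 h3
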